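/- For all x, y ∈ [0,1], the identity −1 + K₂(φ(x),φ(y)) = (1/π⁴)·Σ_{k=1}^∞ Σ_{ℓ=1}^∞ c^φ(k,ℓ)·cos(2πkx)·cos(2πℓy) holds, where the double series converges absolutely and c^φ(k,ℓ) = (1/k⁴)(58/3 − 32/(π²k²)) if k,ℓ are both odd and k = ℓ; c^φ(k,ℓ) = (1/(k²ℓ²))(52/3 − 16/(π²k²) − 16/(π²ℓ²)) if k,ℓ are both odd and k ≠ ℓ; c^φ(k,ℓ) = 6/k⁴ if k,ℓ are both even and k = ℓ; c^φ(k,ℓ) = 4/(k²ℓ²) if k,ℓ are both even and k ≠ ℓ; and c^φ(k,ℓ) = 0 otherwise. -/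

import Mathlib

/-!
The tent map satisfies `cos (2πkx) = cos (2πk · φ(x)/2)`, so everything reduces to the variables
`s = φ(x)/2` and `t = φ(y)/2` in `[0, 1/2]`. Splitting the diagonal off, the coefficients are
`c(k,l) = (52/3) a_k a_l - (16/π²) (d_k a_l + a_k d_l) + 4 e_k e_l + 2 [k = l] / k⁴`,
where `a_k`, `d_k` are `1/k²`, `1/k⁴` on odd `k` and `e_k` is `1/k²` on even `k` (zero elsewhere).
Hence the double series is a combination of products of absolutely convergent one-dimensional
cosine series, plus the diagonal series
`∑ 2 cos (2πks) cos (2πkt) / k⁴ = ∑ (cos (2πk|s-t|) + cos (2πk(s+t))) / k⁴`.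
All of them are evaluated by the classical expansions `∑ cos (2πks)/k² = π² B₂(s)` and
`∑ cos (2πks)/k⁴ = -(π⁴/3) B₄(s)` (`hasSum_cos_sq`, `hasSum_cos_four`), where the even terms give
the same series at `2s`. What remains is a polynomial identity in `s` and `t`.
-/

open Real

/-- The tent transformation `φ(x) = 1 - |2x - 1|`. -/
noncomputable def tent (x : ℝ) : ℝ := 1 - |2 * x - 1|

/-- The Bernoulli polynomial `B_n` evaluated at a real `x`. -/
noncomputable def bern (n : ℕ) (x : ℝ) : ℝ := Polynomial.aeval x (Polynomial.bernoulli n)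

/-- The reproducing kernel `K₂(x,y) = 1 + B₁(x)B₁(y) + B₂(x)B₂(y)/4 − B₄(|x−y|)/24`. -/
noncomputable def Ktwo (x y : ℝ) : ℝ :=
  1 + bern 1 x * bern 1 y + bern 2 x * bern 2 y / 4 - bern 4 |x - y| / 24

/-- The Fourier coefficients `c^φ(k,ℓ)` of `−1 + K₂(φ(x),φ(y))`. -/
noncomputable def cphi (k l : ℕ) : ℝ :=
  if Odd k ∧ Odd l then
    (if k = l then (1 / (k : ℝ) ^ 4) * (58 / 3 - 32 / (π ^ 2 * (k : ℝ) ^ 2))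
     else (1 / ((k : ℝ) ^ 2 * (l : ℝ) ^ 2)) *
            (52 / 3 - 16 / (π ^ 2 * (k : ℝ) ^ 2) - 16 / (π ^ 2 * (l : ℝ) ^ 2)))
  else if Even k ∧ Even l then
    (if k = l then 6 / (k : ℝ) ^ 4 else 4 / ((k : ℝ) ^ 2 * (l : ℝ) ^ 2))
  else 0

lemma bern_one_eq (x : ℝ) : bern 1 x = x - 1 / 2 := by
  simp [bern, Polynomial.bernoulli_def, Finset.sum_range_succ]
  ring

lemma bern_two_eq (x : ℝ) : bern 2 x = x ^ 2 - x + 1 / 6 := by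
  simp [bern, Polynomial.bernoulli_def, Finset.sum_range_succ]
  ring

lemma bern_four_eq (x : ℝ) : bern 4 x = x ^ 4 - 2 * x ^ 3 + x ^ 2 - 1 / 30 := by
  have h4 : _root_.bernoulli 4 = -1 / 30 := by
    rw [bernoulli_eq_bernoulli'_of_ne_one (by decide), bernoulli'_four]
  have h3 : _root_.bernoulli 3 = 0 := by
    rw [bernoulli_eq_bernoulli'_of_ne_one (by decide), bernoulli'_three]
  simp [bern, Polynomial.bernoulli_def, Finset.sum_range_succ, h4, h3, Nat.choose]
  ring

lemma hasSum_cos_sq {s : ℝ} (hs : s ∈ Set.Icc (0 : ℝ) 1) :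
    HasSum (fun n : ℕ => 1 / (n : ℝ) ^ 2 * cos (2 * π * n * s)) (π ^ 2 * bern 2 s) := by
  have h := hasSum_one_div_nat_pow_mul_cos one_ne_zero hs
  rw [Polynomial.eval_map_algebraMap] at h
  convert! h using 1
  simp [bern, Nat.factorial]
  left
  ring

lemma hasSum_cos_four {s : ℝ} (hs : s ∈ Set.Icc (0 : ℝ) 1) :
    HasSum (fun n : ℕ => 1 / (n : ℝ) ^ 4 * cos (2 * π * n * s)) (-π ^ 4 / 3 * bern 4 s) := by
  have h := hasSum_one_div_nat_pow_mul_cos two_ne_zero hs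
  rw [Polynomial.eval_map_algebraMap] at h
  convert! h using 1
  simp [bern, Nat.factorial]
  left
  ring

/-- Passage from `ℕ` to `ℕ+`; it applies to the cosine series since `1 / 0 ^ m = 0` for `m ≠ 0`. -/
lemma hasSum_pnat {f : ℕ → ℝ} {a : ℝ} (h : HasSum f a) (h0 : f 0 = 0) :
    HasSum (fun n : ℕ+ => f n) a := by
  refine (PNat.coe_injective.hasSum_iff (f := f) ?_).2 h
  intro n hn
  rcases Nat.eq_zero_or_pos n with rfl | hp
  · exact h0
  · exact absurd ⟨⟨n, hp⟩, rfl⟩ hn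

lemma hasSum_even {f : ℕ → ℝ} {a : ℝ} (h : HasSum (fun n => f (2 * n)) a) :
    HasSum (fun n => if Even n then f n else 0) a := by
  have hinj : Function.Injective (fun n : ℕ => 2 * n) := fun a b hab => by
    simpa using hab
  refine (hinj.hasSum_iff ?_).1 ?_
  · intro n hn
    rw [if_neg]
    rintro ⟨m, rfl⟩
    exact hn ⟨m, by ring⟩
  · convert! h using 2
    simp

/-- The `k`-th term, restricted to even `k`, of `∑ cos (2πks) / k ^ m`. -/
noncomputable def evenTerm (m : ℕ) (s : ℝ) (k : ℕ) : ℝ :=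
  if Even k then 1 / (k : ℝ) ^ m * cos (2 * π * k * s) else 0

/-- The `k`-th term, restricted to odd `k`, of `∑ cos (2πks) / k ^ m`. -/
noncomputable def oddTerm (m : ℕ) (s : ℝ) (k : ℕ) : ℝ :=
  if Odd k then 1 / (k : ℝ) ^ m * cos (2 * π * k * s) else 0

lemma hasSum_evenTerm {m : ℕ} {s b : ℝ}
    (h : HasSum (fun n : ℕ => 1 / (n : ℝ) ^ m * cos (2 * π * n * (2 * s))) b) :
    HasSum (evenTerm m s) (1 / 2 ^ m * b) := by
  refine hasSum_even (f := fun n : ℕ => 1 / (n : ℝ) ^ m * cos (2 * π * n * s)) ?_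
  convert! h.mul_left (1 / 2 ^ m : ℝ) using 2 with n
  push_cast
  rw [show 2 * π * n * (2 * s) = 2 * π * (2 * n) * s by ring, mul_pow,
    ← mul_assoc (1 / 2 ^ m : ℝ), div_mul_div_comm, one_mul]

lemma hasSum_oddTerm {m : ℕ} {s a b : ℝ}
    (h : HasSum (fun n : ℕ => 1 / (n : ℝ) ^ m * cos (2 * π * n * s)) a)
    (h' : HasSum (evenTerm m s) b) :
    HasSum (oddTerm m s) (a - b) := by
  convert! h.sub h' using 2 with n
  by_cases hn : Even n
  · simp [evenTerm, oddTerm, hn, Nat.not_odd_iff_even.2 hn]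
  · simp [evenTerm, oddTerm, hn, Nat.not_even_iff_odd.1 hn]

lemma hasSum_prod {f g : ℕ+ → ℝ} {a b : ℝ} (hf : HasSum f a) (hg : HasSum g b) :
    HasSum (fun p : ℕ+ × ℕ+ => f p.1 * g p.2) (a * b) :=
  hf.mul hg (summable_mul_of_summable_norm hf.summable.norm hg.summable.norm)

lemma hasSum_diag {f : ℕ+ → ℝ} {a : ℝ} (hf : HasSum f a) :
    HasSum (fun p : ℕ+ × ℕ+ => if p.1 = p.2 then f p.1 else 0) a := by
  have hinj : Function.Injective (fun k : ℕ+ => (k, k)) := fun a b hab => (Prod.mk.inj hab).1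
  refine (hinj.hasSum_iff ?_).1 ?_
  · rintro ⟨k, l⟩ hkl
    rw [if_neg]
    rintro (rfl : k = l)
    exact hkl ⟨k, rfl⟩
  · simpa [Function.comp_def] using hf

/-- Product-to-sum turns the diagonal series into two `B₄` series. -/
lemma hasSum_cos_mul_cos {s t : ℝ} (hs : s ∈ Set.Icc (0 : ℝ) (1 / 2))
    (ht : t ∈ Set.Icc (0 : ℝ) (1 / 2)) :
    HasSum (fun n : ℕ => 2 / (n : ℝ) ^ 4 * cos (2 * π * n * s) * cos (2 * π * n * t))
      (-π ^ 4 / 3 * (bern 4 |s - t| + bern 4 (s + t))) := by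
  obtain ⟨hs0, hs1⟩ := hs
  obtain ⟨ht0, ht1⟩ := ht
  have h1 := hasSum_cos_four (s := |s - t|)
    ⟨abs_nonneg _, abs_le.2 ⟨by linarith, by linarith⟩⟩
  have h2 := hasSum_cos_four (s := s + t) ⟨by linarith, by linarith⟩
  have h := h1.add h2
  rw [← mul_add] at h
  convert! h using 2 with n
  have hc : cos (2 * π * n * |s - t|) = cos (2 * π * n * s - 2 * π * n * t) := by
    rw [← cos_abs (2 * π * n * s - 2 * π * n * t), ← mul_sub, abs_mul,
      abs_of_nonneg (by positivity : (0 : ℝ) ≤ 2 * π * n)]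
  rw [hc, mul_add (2 * π * (n : ℝ)), cos_sub, cos_add]
  ring

/-- The separation of the coefficients into rank-one parts and a diagonal part. -/
lemma cphi_mul_cos (s t : ℝ) (k l : ℕ+) :
    cphi k l * cos (2 * π * ((k : ℕ) : ℝ) * s) * cos (2 * π * ((l : ℕ) : ℝ) * t) =
      52 / 3 * (oddTerm 2 s k * oddTerm 2 t l)
      - 16 / π ^ 2 * (oddTerm 4 s k * oddTerm 2 t l)
      - 16 / π ^ 2 * (oddTerm 2 s k * oddTerm 4 t l)
      + 4 * (evenTerm 2 s k * evenTerm 2 t l)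
      + (if k = l then 2 / ((k : ℕ) : ℝ) ^ 4 * cos (2 * π * ((k : ℕ) : ℝ) * s) *
          cos (2 * π * ((k : ℕ) : ℝ) * t) else 0) := by
  have hk : ((k : ℕ) : ℝ) ≠ 0 := by exact_mod_cast k.ne_zero
  have hl : ((l : ℕ) : ℝ) ≠ 0 := by exact_mod_cast l.ne_zero
  have hpi : π ≠ 0 := pi_ne_zero
  by_cases hkl : k = l
  · subst hkl
    rcases Nat.even_or_odd (k : ℕ) with h | h
    · have h' := Nat.not_odd_iff_even.2 h
      simp only [cphi, oddTerm, evenTerm, h, h', and_self, if_true, if_false]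
      field_simp
      ring
    · have h' := Nat.not_even_iff_odd.2 h
      simp only [cphi, oddTerm, evenTerm, h, h', and_self, if_true, if_false]
      field_simp
      ring
  · have hkl' : (k : ℕ) ≠ l := fun h => hkl (PNat.coe_injective h)
    rcases Nat.even_or_odd (k : ℕ) with h | h <;> rcases Nat.even_or_odd (l : ℕ) with g | g
    · have h' := Nat.not_odd_iff_even.2 h
      have g' := Nat.not_odd_iff_even.2 g
      simp only [cphi, oddTerm, evenTerm, h, h', g, g', hkl, hkl', and_self, if_true, if_false]
      field_simp
      ring
    · have h' := Nat.not_odd_iff_even.2 h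
      have g' := Nat.not_even_iff_odd.2 g
      simp [cphi, oddTerm, evenTerm, h', g', hkl]
    · have h' := Nat.not_even_iff_odd.2 h
      have g' := Nat.not_odd_iff_even.2 g
      simp [cphi, oddTerm, evenTerm, h', g', hkl]
    · have h' := Nat.not_even_iff_odd.2 h
      have g' := Nat.not_even_iff_odd.2 g
      simp only [cphi, oddTerm, evenTerm, h, h', g, g', hkl, hkl', and_self, if_true, if_false]
      field_simp
      ring

/-- The expansion in the folded variables `s = φ(x)/2`, `t = φ(y)/2`. -/
lemma hasSum_cphi {s t : ℝ} (hs : s ∈ Set.Icc (0 : ℝ) (1 / 2))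
    (ht : t ∈ Set.Icc (0 : ℝ) (1 / 2)) :
    HasSum (fun p : ℕ+ × ℕ+ =>
      cphi (p.1 : ℕ) (p.2 : ℕ) * cos (2 * π * ((p.1 : ℕ) : ℝ) * s) *
        cos (2 * π * ((p.2 : ℕ) : ℝ) * t)) (π ^ 4 * (-1 + Ktwo (2 * s) (2 * t))) := by
  have key : ∀ r : ℝ, r ∈ Set.Icc (0 : ℝ) (1 / 2) →
      HasSum (fun n : ℕ+ => evenTerm 2 r n) (1 / 2 ^ 2 * (π ^ 2 * bern 2 (2 * r))) ∧
      HasSum (fun n : ℕ+ => oddTerm 2 r n)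
        (π ^ 2 * bern 2 r - 1 / 2 ^ 2 * (π ^ 2 * bern 2 (2 * r))) ∧
      HasSum (fun n : ℕ+ => oddTerm 4 r n)
        (-π ^ 4 / 3 * bern 4 r - 1 / 2 ^ 4 * (-π ^ 4 / 3 * bern 4 (2 * r))) := by
    rintro r ⟨h0, h1⟩
    have hr : r ∈ Set.Icc (0 : ℝ) 1 := ⟨h0, by linarith⟩
    have hr2 : 2 * r ∈ Set.Icc (0 : ℝ) 1 := ⟨by linarith, by linarith⟩
    have e2 := hasSum_evenTerm (hasSum_cos_sq hr2)
    have e4 := hasSum_evenTerm (hasSum_cos_four hr2)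
    exact ⟨hasSum_pnat e2 (by simp [evenTerm]),
      hasSum_pnat (hasSum_oddTerm (hasSum_cos_sq hr) e2) (by simp [oddTerm]),
      hasSum_pnat (hasSum_oddTerm (hasSum_cos_four hr) e4) (by simp [oddTerm])⟩
  obtain ⟨es, as, ds⟩ := key s hs
  obtain ⟨et, at', dt⟩ := key t ht
  have hd := hasSum_diag (hasSum_pnat (hasSum_cos_mul_cos hs ht) (by simp))
  have h := (((((hasSum_prod as at').mul_left (52 / 3)).sub
    ((hasSum_prod ds at').mul_left (16 / π ^ 2))).sub
    ((hasSum_prod as dt).mul_left (16 / π ^ 2))).add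
    ((hasSum_prod es et).mul_left 4)).add hd
  convert! h using 1
  · funext p
    exact cphi_mul_cos s t p.1 p.2
  · have hpi : π ≠ 0 := pi_ne_zero
    have habs : |2 * s - 2 * t| = 2 * |s - t| := by
      rw [← mul_sub, abs_mul, abs_two]
    simp only [Ktwo, bern_one_eq, bern_two_eq, bern_four_eq, habs]
    rcases abs_cases (s - t) with ⟨hc, -⟩ | ⟨hc, -⟩ <;> rw [hc] <;> field_simp <;> ring

lemma tent_half_mem {x : ℝ} (hx : x ∈ Set.Icc (0 : ℝ) 1) :
    tent x / 2 ∈ Set.Icc (0 : ℝ) (1 / 2) := by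
  obtain ⟨h0, h1⟩ := hx
  have h2 : |2 * x - 1| ≤ 1 := abs_le.2 ⟨by linarith, by linarith⟩
  have h3 := abs_nonneg (2 * x - 1)
  constructor <;> unfold tent <;> linarith

/-- Folding by the tent map is invisible to the cosines, as `cos (2πn(1 - x)) = cos (2πnx)`. -/
lemma cos_tent_half (n : ℕ) (x : ℝ) :
    cos (2 * π * (n : ℝ) * (tent x / 2)) = cos (2 * π * (n : ℝ) * x) := by
  unfold tent
  rcases abs_cases (2 * x - 1) with ⟨hc, -⟩ | ⟨hc, -⟩ <;> rw [hc]
  · rw [show 2 * π * (n : ℝ) * ((1 - (2 * x - 1)) / 2) = n * (2 * π) - 2 * π * n * x by ring,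
      cos_nat_mul_two_pi_sub]
  · congr 1
    ring

theorem stmt2 (x y : ℝ) (hx : x ∈ Set.Icc (0 : ℝ) 1) (hy : y ∈ Set.Icc (0 : ℝ) 1) :
    Summable (fun p : ℕ+ × ℕ+ =>
      |cphi (p.1 : ℕ) (p.2 : ℕ) * Real.cos (2 * π * ((p.1 : ℕ) : ℝ) * x) *
        Real.cos (2 * π * ((p.2 : ℕ) : ℝ) * y)|) ∧
    -1 + Ktwo (tent x) (tent y) =
      (1 / π ^ 4) * ∑' p : ℕ+ × ℕ+,
        cphi (p.1 : ℕ) (p.2 : ℕ) * Real.cos (2 * π * ((p.1 : ℕ) : ℝ) * x) *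
          Real.cos (2 * π * ((p.2 : ℕ) : ℝ) * y) := by
  have h := hasSum_cphi (tent_half_mem hx) (tent_half_mem hy)
  simp only [cos_tent_half, mul_div_cancel₀ _ (two_ne_zero' ℝ)] at h
  refine ⟨h.summable.abs, ?_⟩
  rw [h.tsum_eq, ← mul_assoc, one_div_mul_cancel (pow_ne_zero 4 pi_ne_zero), one_mul]
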